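/- Let P₁ and P₂ be sober dcpos. Then P₁^∨ and P₂^∨ are order isomorphic if and only if P₁ and P₂ are order isomorphic. -/

import Mathlib

/-!
Every isomorphism `P ≃o Q` carries `⋁`-existing Scott closed sets to such sets, which gives one
direction. For the other, the principal ideals must be recognised inside `P^∨` in terms of its
order alone.

Joins in `P^∨` are concrete: the union of a directed family, or of a nonempty finite bounded
family, of members of `P^∨` is again `⋁`-existing, so the join of such a family is the Scott closure
of its union (`Pvee.supExisting_of_directed`, `Pvee.supExisting_of_finite`, `Pvee.isLUB_cl`).
Hence `{S | S ⊆ C}` is F-Scott closed in `P^∨` for each Scott closed `C` of `P`.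

The crux is that every F-Scott closed set `𝒞` of `P^∨` has this form: if `↓x ∈ 𝒞` for all `x ∈ A`,
then `A ∈ 𝒞` (`Pvee.mem_of_forall_jmap_mem`). To see this, glue two copies of `P^∨` along `𝒞`. The
result is a dcpo-∨↑-semilattice receiving a Scott continuous map from `P`. If `A ∉ 𝒞`, both copies
of `A` bound the image of `A`, so the supremum of that image lies below both copies, hence
in `𝒞`; but it contains `A`, so `A ∈ 𝒞` after all.

Consequently `A ∈ P^∨` is an irreducible closed set of `P` exactly when it is prime with respect to
F-Scott closed sets of `P^∨` (`IsFPrime`). This notion is invariant under order isomorphism, and for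
sober `P` it singles out the principal ideals, which form a copy of `P`.
-/


universe u v

/-- A *dcpo*: a partial order in which every nonempty directed subset has a least upper bound. -/
def IsDcpo (P : Type*) [PartialOrder P] : Prop :=
  ∀ d : Set P, d.Nonempty → DirectedOn (· ≤ ·) d → ∃ a, IsLUB d a

/-- A *dcpo-∨↑-semilattice*: a dcpo in which every consistent pair of elements
(i.e. pair with an upper bound) has a least upper bound. -/
def IsDcpoVSemilattice (L : Type*) [PartialOrder L] : Prop :=
  IsDcpo L ∧ ∀ x y : L, BddAbove ({x, y} : Set L) → ∃ a, IsLUB ({x, y} : Set L) a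

/-- Scott continuity: `f` maps least upper bounds of nonempty directed sets to
least upper bounds of the images. -/
def IsScottContinuous {P : Type*} {L : Type*} [PartialOrder P] [PartialOrder L]
    (f : P → L) : Prop :=
  ∀ d : Set P, d.Nonempty → DirectedOn (· ≤ ·) d → ∀ a, IsLUB d a → IsLUB (f '' d) (f a)

/-- A *Scott closed* set: a lower set closed under least upper bounds of its
nonempty directed subsets. -/
def IsScottClosed {P : Type*} [PartialOrder P] (A : Set P) : Prop :=
  IsLowerSet A ∧ ∀ d : Set P, d ⊆ A → d.Nonempty → DirectedOn (· ≤ ·) d →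
    ∀ a, IsLUB d a → a ∈ A

/-- The Scott closure of a set: the smallest Scott closed set containing it. -/
def scottClosure {P : Type*} [PartialOrder P] (A : Set P) : Set P :=
  ⋂₀ {C | IsScottClosed C ∧ A ⊆ C}

/-- A subset `A` of a dcpo `P` is *⋁-existing* if for every Scott continuous map `f`
into an arbitrary dcpo-∨↑-semilattice `L`, the supremum of `f '' A` exists in `L`. -/
def SupExisting {P : Type u} [PartialOrder P] (A : Set P) : Prop :=
  ∀ (L : Type v) [PartialOrder L], IsDcpoVSemilattice L →
    ∀ f : P → L, IsScottContinuous f → ∃ a, IsLUB (f '' A) a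

/-- An *F-Scott closed* set: a Scott closed set containing the least upper bound of
each of its nonempty finite consistent subsets. -/
def IsFScottClosed {L : Type*} [PartialOrder L] (A : Set L) : Prop :=
  IsScottClosed A ∧ ∀ F : Set L, F ⊆ A → F.Nonempty → F.Finite → BddAbove F →
    ∀ a, IsLUB F a → a ∈ A

/-- The F-Scott closure of a set: the intersection of all F-Scott closed sets containing it. -/
def fScottClosure {L : Type*} [PartialOrder L] (A : Set L) : Set L :=
  ⋂₀ {C | IsFScottClosed C ∧ A ⊆ C}

/-- A *dcpo-∨↑-semilattice homomorphism*: maps least upper bounds of nonempty directed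
sets and of consistent pairs to the least upper bounds of the images. -/
def IsSemilatticeHom {L : Type*} {M : Type*} [PartialOrder L] [PartialOrder M]
    (f : L → M) : Prop :=
  (∀ d : Set L, d.Nonempty → DirectedOn (· ≤ ·) d → ∀ a, IsLUB d a → IsLUB (f '' d) (f a)) ∧
  (∀ x y : L, BddAbove ({x, y} : Set L) → ∀ a, IsLUB ({x, y} : Set L) a →
    IsLUB (f '' ({x, y} : Set L)) (f a))

/-- A subset `A` of a dcpo-∨↑-semilattice `L` is *F-⋁-existing* if for every
dcpo-∨↑-semilattice homomorphism `f` into an arbitrary dcpo-∨↑-semilattice `M`,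
the supremum of `f '' A` exists in `M`. -/
def FSupExisting {L : Type u} [PartialOrder L] (A : Set L) : Prop :=
  ∀ (M : Type v) [PartialOrder M], IsDcpoVSemilattice M →
    ∀ f : L → M, IsSemilatticeHom f → ∃ a, IsLUB (f '' A) a

/-- `P^∨`: the family of all ⋁-existing Scott closed subsets of `P`, ordered by inclusion. -/
abbrev Pvee (P : Type u) [PartialOrder P] : Type u :=
  {A : Set P // IsScottClosed A ∧ SupExisting.{u, u} A}

theorem isScottClosed_principal {P : Type u} [PartialOrder P] (x : P) :
    IsScottClosed (Set.Iic x) := by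
  constructor
  · intro a b hba ha
    exact le_trans hba ha
  · intro d hd _ _ a ha
    exact ha.2 fun y hy => hd hy

theorem supExisting_principal {P : Type u} [PartialOrder P] (x : P) :
    SupExisting.{u, v} (Set.Iic x) := by
  intro L _ _ f hf
  have hdir : DirectedOn (· ≤ ·) (Set.Iic x) := by
    intro a ha b hb
    exact ⟨x, le_refl x, ha, hb⟩
  exact ⟨f x, hf (Set.Iic x) ⟨x, Set.mem_Iic.2 (le_refl x)⟩ hdir x isLUB_Iic⟩

/-- The embedding `j` of `P` into `P^∨`, sending `x` to the principal ideal `↓x`. -/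
def jmap {P : Type u} [PartialOrder P] (x : P) : Pvee P :=
  ⟨Set.Iic x, isScottClosed_principal x, supExisting_principal.{u, u} x⟩

/-- A dcpo is *sober* if every irreducible Scott closed subset is a principal ideal. -/
def IsSoberDcpo (P : Type*) [PartialOrder P] : Prop :=
  ∀ C : Set P, C.Nonempty → IsScottClosed C →
    (∀ A B : Set P, IsScottClosed A → IsScottClosed B → C ⊆ A ∪ B → C ⊆ A ∨ C ⊆ B) →
    ∃ x, C = Set.Iic x

/-! ### Scott closed and `⋁`-existing sets -/

section ScottBasics

variable {P : Type*} {L : Type*} [PartialOrder P] [PartialOrder L]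

theorem IsScottContinuous.mono {f : P → L} (hf : IsScottContinuous f) {x y : P} (h : x ≤ y) :
    f x ≤ f y := by
  -- `y` is the supremum of the directed set `{x, y}`.
  have hdir : DirectedOn (· ≤ ·) ({x, y} : Set P) := by
    intro a ha b hb
    refine ⟨y, by simp, ?_, ?_⟩
    · rcases ha with rfl | rfl <;> simp [h]
    · rcases hb with rfl | rfl <;> simp [h]
  have hl : IsLUB ({x, y} : Set P) y := by
    constructor
    · rintro a (rfl | rfl)
      · exact h
      · exact le_rfl
    · intro b hb
      exact hb (by simp)
  exact (hf _ ⟨x, by simp⟩ hdir y hl).1 ⟨x, by simp, rfl⟩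

theorem IsScottContinuous.isScottClosed_le {f : P → L} (hf : IsScottContinuous f) (m : L) :
    IsScottClosed {x | f x ≤ m} := by
  constructor
  · intro a b hba ha
    exact (hf.mono hba).trans ha
  · intro d hd hne hdir a ha
    refine (hf d hne hdir a ha).2 ?_
    rintro _ ⟨x, hx, rfl⟩
    exact hd hx

theorem isScottClosed_scottClosure (A : Set P) : IsScottClosed (scottClosure A) := by
  constructor
  · intro a b hba ha C hC
    exact hC.1.1 hba (ha C hC)
  · intro d hd hne hdir a ha C hC
    exact hC.1.2 d (fun x hx => hd hx C hC) hne hdir a ha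

theorem subset_scottClosure (A : Set P) : A ⊆ scottClosure A :=
  fun _ hx _ hC => hC.2 hx

theorem scottClosure_subset {A C : Set P} (hC : IsScottClosed C) (h : A ⊆ C) :
    scottClosure A ⊆ C :=
  fun _ hx => hx C ⟨hC, h⟩

theorem IsScottClosed.union {A B : Set P} (hA : IsScottClosed A) (hB : IsScottClosed B) :
    IsScottClosed (A ∪ B) := by
  constructor
  · exact hA.1.union hB.1
  · intro d hd hne hdir a ha
    -- If `d ⊄ A`, the part of `d` above a point outside `A` lies in `B` and is cofinal in `d`.
    by_cases h : d ⊆ A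
    · exact Or.inl (hA.2 d h hne hdir a ha)
    · obtain ⟨x, hx, hxA⟩ := Set.not_subset.1 h
      have key : ∀ y ∈ d, x ≤ y → y ∈ B := fun y hy hxy =>
        (hd hy).resolve_left fun hyA => hxA (hA.1 hxy hyA)
      right
      refine hB.2 d ?_ hne hdir a ha
      intro y hy
      obtain ⟨z, hz, hxz, hyz⟩ := hdir x hx y hy
      exact hB.1 hyz (key z hz hxz)

end ScottBasics

theorem SupExisting.scottClosure {P : Type u} [PartialOrder P] {A : Set P}
    (h : SupExisting.{u, v} A) : SupExisting.{u, v} (scottClosure A) := by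
  intro L _ hL f hf
  obtain ⟨m, hm⟩ := h L hL f hf
  refine ⟨m, ?_, ?_⟩
  · rintro _ ⟨x, hx, rfl⟩
    exact scottClosure_subset (hf.isScottClosed_le m) (fun y hy => hm.1 ⟨y, hy, rfl⟩) hx
  · intro b hb
    exact hm.2 fun y hy => hb (Set.image_mono (subset_scottClosure A) hy)

theorem SupExisting.union {P : Type u} [PartialOrder P] {A B C : Set P}
    (hA : SupExisting.{u, v} A) (hB : SupExisting.{u, v} B) (hC : SupExisting.{u, v} C)
    (hAC : A ⊆ C) (hBC : B ⊆ C) : SupExisting.{u, v} (A ∪ B) := by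
  intro L _ hL f hf
  obtain ⟨a, ha⟩ := hA L hL f hf
  obtain ⟨b, hb⟩ := hB L hL f hf
  obtain ⟨c, hc⟩ := hC L hL f hf
  have hbdd : BddAbove ({a, b} : Set L) := by
    refine ⟨c, ?_⟩
    rintro y (rfl | rfl)
    · exact ha.2 fun y hy => hc.1 (Set.image_mono hAC hy)
    · exact hb.2 fun y hy => hc.1 (Set.image_mono hBC hy)
  obtain ⟨m, hm⟩ := hL.2 a b hbdd
  refine ⟨m, ?_, ?_⟩
  · rintro _ ⟨x, hx | hx, rfl⟩
    · exact (ha.1 ⟨x, hx, rfl⟩).trans (hm.1 (by simp))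
    · exact (hb.1 ⟨x, hx, rfl⟩).trans (hm.1 (by simp))
  · intro u hu
    refine hm.2 ?_
    rintro y (rfl | rfl)
    · exact ha.2 fun y hy => hu (Set.image_mono Set.subset_union_left hy)
    · exact hb.2 fun y hy => hu (Set.image_mono Set.subset_union_right hy)

/-! ### Joins in `P^∨` -/

namespace Pvee

variable {P : Type u} [PartialOrder P]

/-- The union of a family of members of `P^∨`, as a subset of `P`. -/
def un (F : Set (Pvee P)) : Set P := {x | ∃ S ∈ F, x ∈ S.1}

/-- The Scott closure of the union of `F`, as a member of `P^∨`. -/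
def cl (F : Set (Pvee P)) (h : SupExisting.{u, u} (un F)) : Pvee P :=
  ⟨scottClosure (un F), isScottClosed_scottClosure _, h.scottClosure⟩

theorem isLUB_cl (F : Set (Pvee P)) (h : SupExisting.{u, u} (un F)) : IsLUB F (cl F h) := by
  constructor
  · intro S hS x hx
    exact subset_scottClosure _ ⟨S, hS, hx⟩
  · intro T hT
    refine scottClosure_subset T.2.1 ?_
    rintro x ⟨S, hS, hx⟩
    exact hT hS hx

theorem supExisting_of_finite {F : Set (Pvee P)} (hfin : F.Finite) (hne : F.Nonempty)
    (hb : BddAbove F) : SupExisting.{u, u} (un F) := by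
  obtain ⟨T, hT⟩ := hb
  induction F, hfin using Set.Finite.induction_on with
  | empty => exact absurd hne Set.not_nonempty_empty
  | @insert S F _ _ ih =>
    have hun : un (insert S F) = S.1 ∪ un F := by
      ext x
      simp [un]
    have hFT : T ∈ upperBounds F := fun y hy => hT (Set.mem_insert_of_mem _ hy)
    rw [hun]
    rcases F.eq_empty_or_nonempty with rfl | hF
    · have : un (∅ : Set (Pvee P)) = ∅ := by
        ext x
        simp [un]
      rw [this, Set.union_empty]
      exact S.2.2
    · refine SupExisting.union S.2.2 (ih hF hFT) T.2.2 (hT (Set.mem_insert _ _)) ?_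
      rintro x ⟨R, hR, hx⟩
      exact hFT hR hx

theorem supExisting_of_directed {F : Set (Pvee P)} (hne : F.Nonempty)
    (hdir : DirectedOn (· ≤ ·) F) : SupExisting.{u, u} (un F) := by
  intro L _ hL f hf
  choose g hg using fun S : Pvee P => S.2.2 L hL f hf
  have gmono : ∀ S T : Pvee P, S ≤ T → g S ≤ g T := fun S T h =>
    (hg S).2 fun y hy => (hg T).1 (Set.image_mono h hy)
  have hdir' : DirectedOn (· ≤ ·) (g '' F) := by
    rintro _ ⟨S, hS, rfl⟩ _ ⟨T, hT, rfl⟩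
    obtain ⟨R, hR, h1, h2⟩ := hdir S hS T hT
    exact ⟨g R, ⟨R, hR, rfl⟩, gmono _ _ h1, gmono _ _ h2⟩
  obtain ⟨m, hm⟩ := hL.1 (g '' F) (hne.image g) hdir'
  refine ⟨m, ?_, ?_⟩
  · rintro _ ⟨x, ⟨S, hS, hx⟩, rfl⟩
    exact ((hg S).1 ⟨x, hx, rfl⟩).trans (hm.1 ⟨S, hS, rfl⟩)
  · intro u hu
    refine hm.2 ?_
    rintro _ ⟨S, hS, rfl⟩
    refine (hg S).2 ?_
    rintro _ ⟨x, hx, rfl⟩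
    exact hu ⟨x, ⟨S, hS, hx⟩, rfl⟩

theorem isDcpo : IsDcpo (Pvee P) := fun d hne hdir =>
  ⟨_, isLUB_cl d (supExisting_of_directed hne hdir)⟩

theorem exists_isLUB_pair (S T : Pvee P) (hb : BddAbove ({S, T} : Set (Pvee P))) :
    ∃ R, IsLUB ({S, T} : Set (Pvee P)) R :=
  ⟨_, isLUB_cl _ (supExisting_of_finite (Set.toFinite _) ⟨S, by simp⟩ hb)⟩

theorem isFScottClosed_subset {C : Set P} (hC : IsScottClosed C) :
    IsFScottClosed {S : Pvee P | S.1 ⊆ C} := by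
  have key : ∀ F : Set (Pvee P), F ⊆ {S : Pvee P | S.1 ⊆ C} → SupExisting.{u, u} (un F) →
      ∀ a, IsLUB F a → a ∈ {S : Pvee P | S.1 ⊆ C} := by
    intro F hF hs a ha
    rw [ha.unique (isLUB_cl F hs)]
    refine scottClosure_subset hC ?_
    rintro x ⟨S, hS, hx⟩
    exact hF hS hx
  refine ⟨⟨fun S T hTS hS => Set.Subset.trans hTS hS, ?_⟩, ?_⟩
  · intro d hd hne hdir a ha
    exact key d hd (supExisting_of_directed hne hdir) a ha
  · intro F hF hne hfin hb a ha
    exact key F hF (supExisting_of_finite hfin hne hb) a ha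

theorem jmap_le_iff {x : P} {S : Pvee P} : jmap x ≤ S ↔ x ∈ S.1 :=
  ⟨fun h => h (le_refl x), fun h _ hy => S.2.1.1 hy h⟩

theorem jmap_le_jmap {x y : P} : jmap x ≤ jmap y ↔ x ≤ y := jmap_le_iff

theorem jmap_continuous : IsScottContinuous (jmap : P → Pvee P) := by
  intro d hne hdir a ha
  constructor
  · rintro _ ⟨x, hx, rfl⟩
    exact jmap_le_jmap.2 (ha.1 hx)
  · intro S hS
    exact jmap_le_iff.2 (S.2.1.2 d (fun x hx => jmap_le_iff.1 (hS ⟨x, hx, rfl⟩)) hne hdir a ha)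

theorem jmap_directed {d : Set P} (hdir : DirectedOn (· ≤ ·) d) :
    DirectedOn (· ≤ ·) (jmap '' d) := by
  rintro _ ⟨x, hx, rfl⟩ _ ⟨y, hy, rfl⟩
  obtain ⟨z, hz, h1, h2⟩ := hdir x hx y hy
  exact ⟨jmap z, ⟨z, hz, rfl⟩, jmap_le_jmap.2 h1, jmap_le_jmap.2 h2⟩

theorem isScottClosed_jmap_preimage {𝒞 : Set (Pvee P)} (h : IsScottClosed 𝒞) :
    IsScottClosed {x : P | jmap x ∈ 𝒞} := by
  constructor
  · intro a b hba ha
    exact h.1 (jmap_le_jmap.2 hba) ha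
  · intro d hd hne hdir a ha
    refine h.2 (jmap '' d) ?_ (hne.image _) (jmap_directed hdir) _ (jmap_continuous d hne hdir a ha)
    rintro _ ⟨x, hx, rfl⟩
    exact hd hx

/-! ### Gluing two copies of `P^∨` along an F-Scott closed set -/

/-- Two copies of `P^∨`, indexed by `Bool`, glued along `𝒞`. A point is `S ∈ P^∨` with a
set of labels, empty when `S ∈ 𝒞` and a singleton (naming the copy) otherwise; the order is the
product order. -/
abbrev Double (𝒞 : Set (Pvee P)) : Type u :=
  {p : Pvee P × Set Bool // (p.1 ∈ 𝒞 ↔ ∀ b, b ∉ p.2) ∧ ∃ b, p.2 ⊆ {b}}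

/-- The element `S` in the copy labelled `b`. -/
def Double.mk (𝒞 : Set (Pvee P)) (S : Pvee P) (b : Bool) : Double 𝒞 :=
  ⟨(S, {c | c = b ∧ S ∉ 𝒞}), by simp, b, fun _ hc => hc.1⟩

/-- Suprema in the glued poset are computed in `P^∨` for families that meet at most one copy. -/
theorem Double.isLUB {𝒞 : Set (Pvee P)} (h𝒞 : IsScottClosed 𝒞) {X : Set (Double 𝒞)} {S : Pvee P}
    {b : Bool} (hS : IsLUB ((fun p : Double 𝒞 => p.1.1) '' X) S)
    (hX : (∀ p ∈ X, p.1.1 ∈ 𝒞) → S ∈ 𝒞) (hb : ∀ p ∈ X, p.1.2 ⊆ {b}) :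
    IsLUB X (Double.mk 𝒞 S b) := by
  constructor
  · intro p hp
    have hpS : p.1.1 ≤ S := hS.1 ⟨p, hp, rfl⟩
    refine ⟨hpS, fun c hc => ⟨hb p hp hc, fun hmem => ?_⟩⟩
    exact p.2.1.1 (h𝒞.1 hpS hmem) c hc
  · intro u hu
    refine ⟨hS.2 ?_, ?_⟩
    · rintro _ ⟨p, hp, rfl⟩
      exact (hu hp).1
    · rintro c ⟨rfl, hmem⟩
      by_contra hcu
      refine hmem (hX fun p hp => p.2.1.2 fun e he => ?_)
      have hec : e = c := hb p hp he
      subst hec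
      exact hcu ((hu hp).2 he)

theorem Double.isDcpoVSemilattice {𝒞 : Set (Pvee P)} (h𝒞 : IsFScottClosed 𝒞) :
    IsDcpoVSemilattice (Double 𝒞) := by
  constructor
  · intro d hne hdir
    have hdir' : DirectedOn (· ≤ ·) ((fun p : Double 𝒞 => p.1.1) '' d) := by
      rintro _ ⟨p, hp, rfl⟩ _ ⟨q, hq, rfl⟩
      obtain ⟨r, hr, h1, h2⟩ := hdir p hp q hq
      exact ⟨_, ⟨r, hr, rfl⟩, h1.1, h2.1⟩
    obtain ⟨S, hS⟩ := isDcpo _ (hne.image _) hdir'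
    -- A directed family cannot meet both copies outside `𝒞`.
    have hb : ∃ b, ∀ p ∈ d, p.1.2 ⊆ {b} := by
      by_cases h : ∃ p ∈ d, ∃ b, b ∈ p.1.2
      · obtain ⟨p, hp, b, hbp⟩ := h
        refine ⟨b, fun q hq => ?_⟩
        obtain ⟨r, hr, h1, h2⟩ := hdir p hp q hq
        obtain ⟨c, hc⟩ := r.2.2
        have hbc : b = c := hc (h1.2 hbp)
        subst hbc
        exact Set.Subset.trans h2.2 hc
      · exact ⟨true, fun p hp b hbp => absurd ⟨p, hp, b, hbp⟩ h⟩
    obtain ⟨b, hb⟩ := hb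
    refine ⟨_, Double.isLUB h𝒞.1 hS (fun h => ?_) hb⟩
    refine h𝒞.1.2 _ ?_ (hne.image _) hdir' S hS
    rintro _ ⟨p, hp, rfl⟩
    exact h p hp
  · rintro p q ⟨r, hr⟩
    have himg : (fun p : Double 𝒞 => p.1.1) '' {p, q} = {p.1.1, q.1.1} := Set.image_pair _ _ _
    have hbdd : BddAbove ({p.1.1, q.1.1} : Set (Pvee P)) := by
      refine ⟨r.1.1, ?_⟩
      rw [← himg]
      rintro _ ⟨s, hs, rfl⟩
      exact (hr hs).1
    obtain ⟨S, hS⟩ := exists_isLUB_pair _ _ hbdd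
    obtain ⟨b, hb⟩ := r.2.2
    refine ⟨_, Double.isLUB h𝒞.1 (himg ▸ hS) (fun h => ?_)
      (fun s hs => Set.Subset.trans (hr hs).2 hb)⟩
    refine h𝒞.2 _ ?_ ⟨_, Set.mem_insert _ _⟩ (Set.toFinite _) hbdd S hS
    rw [← himg]
    rintro _ ⟨s, hs, rfl⟩
    exact h s hs

theorem Double.mk_jmap_continuous {𝒞 : Set (Pvee P)} (h𝒞 : IsScottClosed 𝒞) :
    IsScottContinuous fun x : P => Double.mk 𝒞 (jmap x) true := by
  intro d hne hdir a ha
  have himg : (fun p : Double 𝒞 => p.1.1) '' ((fun x : P => Double.mk 𝒞 (jmap x) true) '' d)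
      = jmap '' d := by
    rw [Set.image_image]
    rfl
  refine Double.isLUB h𝒞 (himg ▸ jmap_continuous d hne hdir a ha) (fun h => ?_) ?_
  · exact (isScottClosed_jmap_preimage h𝒞).2 d (fun x hx => h _ ⟨x, hx, rfl⟩) hne hdir a ha
  · rintro _ ⟨x, _, rfl⟩ c hc
    exact hc.1

/-- An F-Scott closed subset of `P^∨` is determined by the principal ideals in it: it contains
every `A` all of whose principal ideals it contains. -/
theorem mem_of_forall_jmap_mem {𝒞 : Set (Pvee P)} (h𝒞 : IsFScottClosed 𝒞) (A : Pvee P)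
    (hA : ∀ x ∈ A.1, jmap x ∈ 𝒞) : A ∈ 𝒞 := by
  obtain ⟨w, hw⟩ := A.2.2 (Double 𝒞) (Double.isDcpoVSemilattice h𝒞) _
    (Double.mk_jmap_continuous h𝒞.1)
  -- Both copies of `A` are upper bounds of the image of `A`, which lies in the glued part `𝒞`.
  have hle : ∀ b, w ≤ Double.mk 𝒞 A b := by
    intro b
    refine hw.2 ?_
    rintro _ ⟨x, hx, rfl⟩
    exact ⟨jmap_le_iff.2 hx, fun c hc => absurd (hA x hx) hc.2⟩
  have hw𝒞 : w.1.1 ∈ 𝒞 := by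
    refine w.2.1.2 fun b hb => ?_
    have h1 : b = true := ((hle true).2 hb).1
    have h2 : b = false := ((hle false).2 hb).1
    exact absurd (h1.symm.trans h2) (by simp)
  refine h𝒞.1.1 ?_ hw𝒞
  intro x hx
  exact jmap_le_iff.1 (hw.1 ⟨x, hx, rfl⟩).1

theorem nonempty (A : Pvee P) : A.1.Nonempty := by
  by_contra h
  rw [Set.not_nonempty_iff_eq_empty] at h
  -- The empty family is F-Scott closed, as only nonempty families are required to have joins in it.
  have hE : IsFScottClosed (∅ : Set (Pvee P)) := by
    refine ⟨⟨fun _ _ _ h => h, ?_⟩, ?_⟩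
    · intro d hd hne
      exact absurd (Set.subset_empty_iff.1 hd) hne.ne_empty
    · intro d hd hne
      exact absurd (Set.subset_empty_iff.1 hd) hne.ne_empty
  exact mem_of_forall_jmap_mem hE A (fun x hx => by simp [h] at hx)

end Pvee

/-! ### Principal ideals as prime elements -/

section FPrime

variable {L : Type*} {M : Type*} [PartialOrder L] [PartialOrder M]

theorem isFScottClosed_fScottClosure (A : Set L) : IsFScottClosed (fScottClosure A) := by
  refine ⟨⟨?_, ?_⟩, ?_⟩
  · intro a b hba ha C hC
    exact hC.1.1.1 hba (ha C hC)
  · intro d hd hne hdir a ha C hC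
    exact hC.1.1.2 d (fun x hx => hd hx C hC) hne hdir a ha
  · intro F hF hne hfin hb a ha C hC
    exact hC.1.2 F (fun x hx => hF hx C hC) hne hfin hb a ha

/-- An element is *F-prime* if it lies in one of two F-Scott closed sets as soon as it lies in
their join among F-Scott closed sets, i.e. in the F-Scott closure of their union. -/
def IsFPrime (a : L) : Prop :=
  ∀ A B : Set L, IsFScottClosed A → IsFScottClosed B → a ∈ fScottClosure (A ∪ B) → a ∈ A ∨ a ∈ B

theorem IsScottClosed.preimage_orderIso (e : L ≃o M) {A : Set M} (hA : IsScottClosed A) :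
    IsScottClosed (e ⁻¹' A) := by
  constructor
  · intro a b hba ha
    exact hA.1 (e.monotone hba) ha
  · intro d hd hne hdir a ha
    refine hA.2 (e '' d) (Set.image_subset_iff.2 hd) (hne.image _) ?_ _ (e.isLUB_image'.2 ha)
    rintro _ ⟨x, hx, rfl⟩ _ ⟨y, hy, rfl⟩
    obtain ⟨z, hz, h1, h2⟩ := hdir x hx y hy
    exact ⟨e z, ⟨z, hz, rfl⟩, e.monotone h1, e.monotone h2⟩

theorem IsFScottClosed.preimage_orderIso (e : L ≃o M) {A : Set M} (hA : IsFScottClosed A) :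
    IsFScottClosed (e ⁻¹' A) := by
  refine ⟨hA.1.preimage_orderIso e, ?_⟩
  intro F hF hne hfin hb a ha
  exact hA.2 (e '' F) (Set.image_subset_iff.2 hF) (hne.image _) (hfin.image _)
    (e.monotone.map_bddAbove hb) _ (e.isLUB_image'.2 ha)

theorem IsFPrime.map_orderIso (e : L ≃o M) {a : L} (ha : IsFPrime a) : IsFPrime (e a) := by
  intro A B hA hB h
  refine ha (e ⁻¹' A) (e ⁻¹' B) (hA.preimage_orderIso e) (hB.preimage_orderIso e) ?_
  rintro C ⟨hC, hABC⟩
  have := h (e.symm ⁻¹' C) ⟨hC.preimage_orderIso e.symm, fun y hy => hABC (by simpa using hy)⟩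
  simpa using this

end FPrime

/-! ### Recovering `P` from `P^∨` -/

namespace Pvee

variable {P : Type u} [PartialOrder P]

theorem isFPrime_jmap (x : P) : IsFPrime (jmap x) := by
  intro 𝒜 ℬ h𝒜 hℬ h
  have hU : IsScottClosed ({x : P | jmap x ∈ 𝒜} ∪ {x : P | jmap x ∈ ℬ}) :=
    (isScottClosed_jmap_preimage h𝒜.1).union (isScottClosed_jmap_preimage hℬ.1)
  refine h _ ⟨isFScottClosed_subset hU, ?_⟩ (le_refl x)
  rintro S (hS | hS) y hy
  · exact Or.inl (h𝒜.1.1 (jmap_le_iff.2 hy) hS)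
  · exact Or.inr (hℬ.1.1 (jmap_le_iff.2 hy) hS)

theorem exists_eq_jmap (hs : IsSoberDcpo P) {A : Pvee P} (hA : IsFPrime A) :
    ∃ x, A = jmap x := by
  obtain ⟨x, hx⟩ := hs A.1 (nonempty A) A.2.1 (by
    intro C D hC hD hCD
    refine hA _ _ (isFScottClosed_subset hC) (isFScottClosed_subset hD) ?_
    refine mem_of_forall_jmap_mem (isFScottClosed_fScottClosure _) A fun x hx => ?_
    rintro 𝒞 ⟨-, h𝒞⟩
    refine h𝒞 ((hCD hx).imp ?_ ?_)
    · exact fun hxC y hy => hC.1 hy hxC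
    · exact fun hxD y hy => hD.1 hy hxD)
  exact ⟨x, Subtype.ext hx⟩

variable {Q : Type u} [PartialOrder Q]

/-- The map `P^∨ → Q^∨` induced by an order isomorphism, by direct image along `e` (written as the
preimage under the inverse). -/
def map (e : P ≃o Q) (A : Pvee P) : Pvee Q :=
  ⟨e.symm ⁻¹' A.1, A.2.1.preimage_orderIso e.symm, by
    intro L _ hL f hf
    have hfe : IsScottContinuous (f ∘ e) := by
      intro d hne hdir a ha
      rw [Set.image_comp]
      refine hf (e '' d) (hne.image _) ?_ _ (e.isLUB_image'.2 ha)
      rintro _ ⟨x, hx, rfl⟩ _ ⟨y, hy, rfl⟩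
      obtain ⟨z, hz, h1, h2⟩ := hdir x hx y hy
      exact ⟨e z, ⟨z, hz, rfl⟩, e.monotone h1, e.monotone h2⟩
    have := A.2.2 L hL _ hfe
    rwa [Set.image_comp, e.image_eq_preimage_symm] at this⟩

end Pvee

/-- For sober dcpos `P₁` and `P₂`, `P₁^∨ ≅ P₂^∨` iff `P₁ ≅ P₂`. -/
theorem pvee_orderIso_iff_of_sober {P₁ : Type u} {P₂ : Type u}
    [PartialOrder P₁] [PartialOrder P₂]
    (h₁ : IsDcpo P₁) (h₂ : IsDcpo P₂) (hs₁ : IsSoberDcpo P₁) (hs₂ : IsSoberDcpo P₂) :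
    Nonempty (Pvee P₁ ≃o Pvee P₂) ↔ Nonempty (P₁ ≃o P₂) := by
  constructor
  · rintro ⟨Φ⟩
    choose f hf using fun x : P₁ =>
      Pvee.exists_eq_jmap hs₂ ((Pvee.isFPrime_jmap x).map_orderIso Φ)
    choose g hg using fun y : P₂ =>
      Pvee.exists_eq_jmap hs₁ ((Pvee.isFPrime_jmap y).map_orderIso Φ.symm)
    have hle : ∀ x y, f x ≤ f y ↔ x ≤ y := fun x y => by
      rw [← Pvee.jmap_le_jmap, ← hf, ← hf, Φ.le_iff_le, Pvee.jmap_le_jmap]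
    have hfg : ∀ y, f (g y) = y := fun y => by
      have h : jmap (f (g y)) = jmap y := by rw [← hf, ← hg, Φ.apply_symm_apply]
      exact le_antisymm (Pvee.jmap_le_jmap.1 h.le) (Pvee.jmap_le_jmap.1 h.ge)
    refine ⟨⟨⟨f, g, fun x => ?_, hfg⟩, hle _ _⟩⟩
    exact le_antisymm ((hle _ _).1 (hfg (f x)).le) ((hle _ _).1 (hfg (f x)).ge)
  · rintro ⟨e⟩
    refine ⟨⟨⟨Pvee.map e, Pvee.map e.symm, fun A => ?_, fun B => ?_⟩, ?_⟩⟩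
    · apply Subtype.ext
      ext x
      simp [Pvee.map]
    · apply Subtype.ext
      ext x
      simp [Pvee.map]
    · intro A B
      exact e.symm.surjective.preimage_subset_preimage_iff
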